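/- arXiv:2303.03182 — 6 statements merged into one kernel-verified Lean document; each statement's English description precedes it below -/
import Mathlib

section
/- Suppose there are two active users requesting distinct files: A = {u₁, u₂} with d_{u₁} = n₁ ≠ n₂ = d_{u₂}, where q_{n₁}, q_{n₂} ∈ [0,1] and F_{n₁}, F_{n₂} ≥ 0, and the leader group is U = {u₁, u₂}. Then R_MCCS(d; q) = (1 − q_{n₁})² F_{n₁} + (1 − q_{n₂})² F_{n₂} + max{ q_{n₁}(1 − q_{n₁}) F_{n₁}, q_{n₂}(1 − q_{n₂}) F_{n₂} }, and this quantity equals R_lb({n₁, n₂}; q). -/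
/-!
Both rates are computed explicitly. The groups served by the D-MCCS are `{u₁}`, `{u₂}` and
`{u₁, u₂}`, which contribute the two squares and the maximum respectively. In the lower bound,
the `s = 0` terms contribute the two squares for every ordering `π`, while at `s = 1` only the
first file survives, because `C(1, 1) = 1` and `C(0, 1) = 0`. So the value at `π` depends only on
`π 1`, and since either file can be placed first, the supremum is the maximum.
-/

open Finset

/-- Maximum of a real-valued function over a finite set (`0` if the set is empty). -/
noncomputable def maxOver {α : Type*} (S : Finset α) (f : α → ℝ) : ℝ :=
  if h : S.Nonempty then S.sup' h f else 0

/-- The D-MCCS delivery rate: the sum, over nonempty subsets `S ⊆ A` with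
`S ∩ U ≠ ∅` (the non-redundant groups), of
`max_{k ∈ S} q_{d_k}^{|S|−1} (1 − q_{d_k})^{|A|−|S|+1} F_{d_k}`. -/
noncomputable def R_MCCS {α : Type*} [DecidableEq α] {N : ℕ} (A U : Finset α)
    (d : α → Fin N) (q F : Fin N → ℝ) : ℝ :=
  ∑ S ∈ A.powerset.filter (fun S => (S ∩ U).Nonempty),
    maxOver S (fun k =>
      q (d k) ^ (S.card - 1) * (1 - q (d k)) ^ (A.card - S.card + 1) * F (d k))

/-- The lower-bound rate: the maximum over bijections `π : {1,…,|D|} → D` of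
`Σ_{s=0}^{|A|−1} Σ_{i=1}^{|D|} C(|A|−i, s) q_{π(i)}^s (1 − q_{π(i)})^{|A|−s} F_{π(i)}`,
where `Acard = |A|`. -/
noncomputable def R_lb {N : ℕ} (Acard : ℕ) (D : Finset (Fin N))
    (q F : Fin N → ℝ) : ℝ :=
  ⨆ π : Fin D.card ≃ {x : Fin N // x ∈ D},
    ∑ s ∈ Finset.range Acard, ∑ i : Fin D.card,
      ((Acard - (i.1 + 1)).choose s : ℝ) * q (π i).1 ^ s *
        (1 - q (π i).1) ^ (Acard - s) * F (π i).1

/-- `U` is a leader group for active set `A` with demand map `d`: `U ⊆ A`, the demand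
map is injective on `U`, and the users in `U` request exactly the distinct files
requested by the users in `A`. -/
def IsLeaderGroup {α : Type*} [DecidableEq α] {N : ℕ} (A U : Finset α)
    (d : α → Fin N) : Prop :=
  U ⊆ A ∧ Set.InjOn d ↑U ∧ U.image d = A.image d

theorem maxOver_singleton {α : Type*} (a : α) (f : α → ℝ) : maxOver {a} f = f a := by
  simp [maxOver]

theorem maxOver_pair {α : Type*} [DecidableEq α] (a b : α) (f : α → ℝ) :
    maxOver {a, b} f = max (f a) (f b) := by
  rw [maxOver, dif_pos (by simp), Finset.sup'_insert (Finset.singleton_nonempty b)]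
  simp

theorem R_MCCS_pair {α : Type*} [DecidableEq α] {N : ℕ} {u₁ u₂ : α} (hu : u₁ ≠ u₂)
    (d : α → Fin N) (q F : Fin N → ℝ) :
    R_MCCS {u₁, u₂} {u₁, u₂} d q F
      = (1 - q (d u₁)) ^ 2 * F (d u₁) + (1 - q (d u₂)) ^ 2 * F (d u₂)
        + max (q (d u₁) * (1 - q (d u₁)) * F (d u₁))
          (q (d u₂) * (1 - q (d u₂)) * F (d u₂)) := by
  have hgroups : ({u₁, u₂} : Finset α).powerset.filter (fun S => (S ∩ {u₁, u₂}).Nonempty)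
      = {{u₁}, {u₂}, {u₁, u₂}} := by
    ext S
    simp only [Finset.mem_filter, Finset.mem_powerset, Finset.mem_insert, Finset.mem_singleton]
    constructor
    · rintro ⟨hS, hne⟩
      have hS' : (S : Set α) ⊆ {u₁, u₂} := by simpa using Finset.coe_subset.mpr hS
      rcases Set.subset_pair_iff_eq.mp hS' with h | h | h | h
      · simp [Finset.coe_eq_empty.mp h] at hne
      · exact Or.inl (Finset.coe_injective (by simpa using h))
      · exact Or.inr (Or.inl (Finset.coe_injective (by simpa using h)))
      · exact Or.inr (Or.inr (Finset.coe_injective (by simpa using h)))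
    · rintro (rfl | rfl | rfl) <;> simp
  have h₁₂ : ({u₁} : Finset α) ≠ {u₂} := by simpa using hu
  have h₁ : ({u₁} : Finset α) ≠ {u₁, u₂} := by
    intro h
    simpa [hu] using congrArg Finset.card h
  have h₂ : ({u₂} : Finset α) ≠ {u₁, u₂} := by
    intro h
    simpa [hu] using congrArg Finset.card h
  rw [R_MCCS, hgroups, Finset.sum_insert (by simp [h₁₂, h₁]), Finset.sum_pair h₂,
    maxOver_singleton, maxOver_singleton, maxOver_pair]
  simp [Finset.card_pair hu, add_assoc]

/-- An ordering of a two-element set is determined by which element comes first, and both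
choices occur; the value of the sum depends on the ordering only through the first element. -/
theorem R_lb_pair {N : ℕ} {n₁ n₂ : Fin N} (hn : n₁ ≠ n₂) (q F : Fin N → ℝ) :
    R_lb 2 {n₁, n₂} q F
      = (1 - q n₁) ^ 2 * F n₁ + (1 - q n₂) ^ 2 * F n₂
        + max (q n₁ * (1 - q n₁) * F n₁) (q n₂ * (1 - q n₂) * F n₂) := by
  have hcard : ({n₁, n₂} : Finset (Fin N)).card = 2 := Finset.card_pair hn
  unfold R_lb
  -- The cardinality occurs in the type `Fin _`, so it cannot simply be rewritten to `2`.
  generalize ({n₁, n₂} : Finset (Fin N)).card = m at hcard ⊢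
  subst hcard
  let a₁ : {x : Fin N // x ∈ ({n₁, n₂} : Finset (Fin N))} := ⟨n₁, by simp⟩
  let a₂ : {x : Fin N // x ∈ ({n₁, n₂} : Finset (Fin N))} := ⟨n₂, by simp⟩
  have ha : a₁ ≠ a₂ := fun h => hn (congrArg Subtype.val h)
  have hcases : ∀ x : {x : Fin N // x ∈ ({n₁, n₂} : Finset (Fin N))}, x = a₁ ∨ x = a₂ := by
    rintro ⟨x, hx⟩
    simpa [a₁, a₂] using hx
  let e : Fin 2 ≃ {x : Fin N // x ∈ ({n₁, n₂} : Finset (Fin N))} :=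
    Equiv.ofBijective ![a₁, a₂] (by
      constructor
      · intro i j hij
        fin_cases i <;> fin_cases j <;> simp_all
      · intro x
        rcases hcases x with rfl | rfl
        · exact ⟨0, rfl⟩
        · exact ⟨1, rfl⟩)
  have he₀ : (e 0).1 = n₁ := rfl
  have he₁ : (e 1).1 = n₂ := rfl
  have : Nonempty (Fin 2 ≃ {x : Fin N // x ∈ ({n₁, n₂} : Finset (Fin N))}) := ⟨e⟩
  apply le_antisymm
  · apply ciSup_le
    intro π
    have hne : π 0 ≠ π 1 := by simp
    have hval : ((π 0).1 = n₁ ∧ (π 1).1 = n₂) ∨ ((π 0).1 = n₂ ∧ (π 1).1 = n₁) := by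
      rcases hcases (π 0) with h | h <;> rcases hcases (π 1) with h' | h' <;>
        simp_all [a₁, a₂]
    have hl := le_max_left (q n₁ * (1 - q n₁) * F n₁) (q n₂ * (1 - q n₂) * F n₂)
    have hr := le_max_right (q n₁ * (1 - q n₁) * F n₁) (q n₂ * (1 - q n₂) * F n₂)
    rcases hval with ⟨h₀, h₁⟩ | ⟨h₀, h₁⟩ <;>
      simp [Finset.sum_range_succ, Fin.sum_univ_two, h₀, h₁] <;> grind
  · rcases max_cases (q n₁ * (1 - q n₁) * F n₁) (q n₂ * (1 - q n₂) * F n₂) with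
      ⟨h, -⟩ | ⟨h, -⟩ <;> rw [h]
    · apply le_ciSup_of_le (Set.finite_range _).bddAbove e
      simp [Finset.sum_range_succ, Fin.sum_univ_two, he₀, he₁]
    · apply le_ciSup_of_le (Set.finite_range _).bddAbove ((Equiv.swap 0 1).trans e)
      simp [Finset.sum_range_succ, Fin.sum_univ_two, he₀, he₁, add_comm]

/-- Two active users `A = {u₁, u₂}` requesting distinct files `n₁ ≠ n₂`, with leader
group `U = {u₁, u₂}`: the D-MCCS rate equals
`(1 − q_{n₁})² F_{n₁} + (1 − q_{n₂})² F_{n₂}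
  + max{q_{n₁}(1 − q_{n₁})F_{n₁}, q_{n₂}(1 − q_{n₂})F_{n₂}}`,
and this quantity equals the lower-bound rate `R_lb({n₁, n₂}; q)`. -/
theorem two_users_distinct_files_rate_eq {α : Type*} [DecidableEq α] {N : ℕ}
    (u₁ u₂ : α) (hu : u₁ ≠ u₂) (n₁ n₂ : Fin N) (hn : n₁ ≠ n₂)
    (q F : Fin N → ℝ) (hq1 : q n₁ ∈ Set.Icc (0 : ℝ) 1) (hq2 : q n₂ ∈ Set.Icc (0 : ℝ) 1)
    (hF1 : 0 ≤ F n₁) (hF2 : 0 ≤ F n₂)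
    (d : α → Fin N) (hd1 : d u₁ = n₁) (hd2 : d u₂ = n₂) :
    R_MCCS {u₁, u₂} {u₁, u₂} d q F
      = (1 - q n₁) ^ 2 * F n₁ + (1 - q n₂) ^ 2 * F n₂
        + max (q n₁ * (1 - q n₁) * F n₁) (q n₂ * (1 - q n₂) * F n₂) ∧
    R_MCCS {u₁, u₂} {u₁, u₂} d q F
      = R_lb ({u₁, u₂} : Finset α).card ({n₁, n₂} : Finset (Fin N)) q F := by
  subst hd1 hd2
  rw [Finset.card_pair hu, R_lb_pair hn, R_MCCS_pair hu]
  exact ⟨rfl, rfl⟩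
end

section
/- Suppose all files have the same size F ≥ 0 (F_n = F for all n) and the placement is symmetric with q_n = q ∈ [0,1] for all n. Then for every active set A, every demand map d on A, and every leader group U, the D-MCCS delivery rate has the closed form R_MCCS(d; q) = Σ_{s=0}^{|A|−1} Σ_{i=1}^{Ñ} C(|A| − i, s) · q^s (1 − q)^{|A|−s} F, where Ñ = |{d_k : k ∈ A}| is the number of distinct requested files. -/
/-!
With uniform size and symmetric placement the maximum over `S` is a constant depending only on
`|S|`, so the rate is `∑ g |S|` over the sets `S ⊆ A` meeting `U`, with
`g m = c ^ (m - 1) * (1 - c) ^ (|A| - m + 1) * Fc`. The sets missing `U` are the subsets of `A \ U`,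
hence this sum is `P |A| - P (|A| - |U|)`, where `P n` is the sum of `g |S|` over the subsets of an
`n`-element set. Pascal's rule evaluates each difference `P (n + 1) - P n`
(`pascal_step`), and telescoping along the `|U|` steps from `|A|` down to `|A| - |U|`
(`sum_telescope`) gives the closed form, since `|U|` is the number of distinct requested files.
-/

open Finset

lemma maxOver_const {α : Type*} {S : Finset α} (hS : S.Nonempty) (x : ℝ) :
    maxOver S (fun _ => x) = x := by
  simp [maxOver, hS]

/-- Pascal's rule, summed against a weight `g`; the summation bound `a` is independent of `n`. -/
lemma pascal_step (g : ℕ → ℝ) (a n : ℕ) :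
    ∑ m ∈ range (a + 1), ((n + 1).choose m : ℝ) * g m
      = ∑ m ∈ range (a + 1), (n.choose m : ℝ) * g m
        + ∑ s ∈ range a, (n.choose s : ℝ) * g (s + 1) := by
  rw [sum_range_succ', sum_range_succ' (fun m => (n.choose m : ℝ) * g m)]
  simp only [Nat.choose_succ_succ', Nat.cast_add, add_mul, sum_add_distrib, Nat.choose_zero_right]
  ring

lemma sum_telescope (g : ℕ → ℝ) (a u : ℕ) (hu : u ≤ a) :
    ∑ m ∈ range (a + 1), (a.choose m : ℝ) * g m
      = ∑ m ∈ range (a + 1), ((a - u).choose m : ℝ) * g m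
        + ∑ i ∈ range u, ∑ s ∈ range a, ((a - (i + 1)).choose s : ℝ) * g (s + 1) := by
  induction u with
  | zero => simp
  | succ u ih =>
    rw [ih (by omega), sum_range_succ _ u, show a - u = a - (u + 1) + 1 by omega, pascal_step]
    ring

/-- Sum of `g |S|` over the subsets `S` of `B`, with the summation range enlarged to any
`a ≥ |B|`; the added binomial coefficients vanish. -/
lemma sum_powerset_card {α : Type*} (B : Finset α) (g : ℕ → ℝ) (a : ℕ) (h : B.card ≤ a) :
    ∑ S ∈ B.powerset, g S.card = ∑ m ∈ range (a + 1), (B.card.choose m : ℝ) * g m := by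
  rw [sum_powerset_apply_card]
  simp only [nsmul_eq_mul]
  refine sum_subset (range_subset_range.2 (by omega)) fun m _ hm => ?_
  rw [Nat.choose_eq_zero_of_lt (by simpa using hm)]
  simp

lemma sum_meeting {α : Type*} [DecidableEq α] (A U : Finset α) (hUA : U ⊆ A) (g : ℕ → ℝ) :
    ∑ S ∈ A.powerset.filter (fun S => (S ∩ U).Nonempty), g S.card
      = ∑ i ∈ range U.card, ∑ s ∈ range A.card,
          ((A.card - (i + 1)).choose s : ℝ) * g (s + 1) := by
  have hmiss : A.powerset.filter (fun S => ¬ (S ∩ U).Nonempty) = (A \ U).powerset := by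
    ext S
    simp only [mem_filter, mem_powerset, subset_sdiff, not_nonempty_iff_eq_empty,
      disjoint_iff_inter_eq_empty]
  have hsplit := sum_filter_add_sum_filter_not A.powerset (fun S => (S ∩ U).Nonempty)
    (fun S => g S.card)
  rw [hmiss, sum_powerset_card A g A.card le_rfl,
    sum_powerset_card (A \ U) g A.card (card_le_card sdiff_subset),
    card_sdiff_of_subset hUA] at hsplit
  linarith [sum_telescope g A.card U.card (card_le_card hUA)]

/-- Uniform file size `F_n = Fc ≥ 0` and symmetric placement `q_n = c ∈ [0,1]`:
for every active set `A`, demand map `d`, and leader group `U`, the D-MCCS rate has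
the closed form
`Σ_{s=0}^{|A|−1} Σ_{i=1}^{Ñ} C(|A| − i, s) c^s (1 − c)^{|A|−s} Fc`, where
`Ñ = |{d_k : k ∈ A}|` is the number of distinct requested files. -/
theorem rate_closed_form_uniform_symmetric {α : Type*} [DecidableEq α] {N : ℕ}
    (A U : Finset α) (d : α → Fin N) (q F : Fin N → ℝ) (c Fc : ℝ)
    (hc : c ∈ Set.Icc (0 : ℝ) 1) (hFc : 0 ≤ Fc)
    (hq : ∀ n, q n = c) (hF : ∀ n, F n = Fc) (hU : IsLeaderGroup A U d) :
    R_MCCS A U d q F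
      = ∑ s ∈ Finset.range A.card, ∑ i ∈ Finset.range (A.image d).card,
          ((A.card - (i + 1)).choose s : ℝ) * c ^ s * (1 - c) ^ (A.card - s) * Fc := by
  obtain ⟨hUA, hinj, himg⟩ := hU
  rw [← himg, card_image_of_injOn hinj, sum_comm]
  have hR : R_MCCS A U d q F = ∑ S ∈ A.powerset.filter (fun S => (S ∩ U).Nonempty),
      (fun m => c ^ (m - 1) * (1 - c) ^ (A.card - m + 1) * Fc) S.card := by
    refine sum_congr rfl fun S hS => ?_
    simp only [hq, hF]
    exact maxOver_const ((mem_filter.1 hS).2.mono inter_subset_left) _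
  rw [hR, sum_meeting A U hUA (fun m => c ^ (m - 1) * (1 - c) ^ (A.card - m + 1) * Fc)]
  refine sum_congr rfl fun i _ => sum_congr rfl fun s hs => ?_
  have hs' : s < A.card := mem_range.1 hs
  simp only [Nat.add_sub_cancel, show A.card - (s + 1) + 1 = A.card - s by omega]
  ring
end

section
/- Suppose all files have the same size F ≥ 0 (F_n = F for all n) and q* ∈ [0,1]^N is symmetric, i.e., q*_1 = q*_2 = … = q*_N = q. Then for every active set A, every demand map d on A, and every leader group U, R_MCCS(d; q*) = R_lb(D; q*), where D = {d_k : k ∈ A}; consequently, for any finitely many weighted demand scenarios, the average rates satisfy R̄_MCCS(q*) = R̄_lb(q*). -/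
/-!
With a common cache fraction `c` and a common file size, the summand of the D-MCCS rate depends
only on `|S|`, and the objective in the lower bound does not depend on the bijection `π`. The
theorem is then a counting identity: listing the leaders as `u₁, …, u_m`, every `S ⊆ A` that meets
`U` has a first leader `u_i`, and the remaining members of `S` form an arbitrary subset of
`A \ {u₁, …, u_i}`, so there are `C(|A| - i, s)` such sets with `|S| = s + 1`. Summing over `i`
and `s` gives the lower bound; the counting is `sum_powerset_meeting`.
-/

open Finset

/-- Grouping the sets `S ⊆ A` that meet `U` by their first element of `U` in some enumeration:
a weight depending only on `|S|` is summed by binomial coefficients. -/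
lemma sum_powerset_meeting {α : Type*} [DecidableEq α] (A U : Finset α) (hU : U ⊆ A)
    (g : ℕ → ℝ) :
    ∑ S ∈ A.powerset.filter (fun S => (S ∩ U).Nonempty), g S.card
      = ∑ i ∈ range U.card, ∑ s ∈ range A.card,
          ((A.card - (i + 1)).choose s : ℝ) * g (s + 1) := by
  induction U using Finset.induction_on with
  | empty => simp
  | insert a U ha ih =>
    have haA : a ∈ A := hU (mem_insert_self a U)
    have hUA : U ⊆ A := fun x hx => hU (mem_insert_of_mem hx)
    rw [card_insert_of_notMem ha, sum_range_succ, ← ih hUA]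
    -- The sets meeting `insert a U` but not `U` are `insert a T` with `T ⊆ A \ insert a U`.
    have hsplit : A.powerset.filter (fun S => (S ∩ insert a U).Nonempty)
        = A.powerset.filter (fun S => (S ∩ U).Nonempty)
          ∪ (A \ insert a U).powerset.image (insert a) := by
      ext S
      simp only [mem_filter, mem_powerset, mem_union, mem_image]
      constructor
      · rintro ⟨hS, x, hx⟩
        by_cases h : (S ∩ U).Nonempty
        · exact Or.inl ⟨hS, h⟩
        · rw [not_nonempty_iff_eq_empty] at h
          have h' : ∀ y ∈ S, y ∉ U := fun y hy hyU => by
            have : y ∈ S ∩ U := mem_inter.2 ⟨hy, hyU⟩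
            simp [h] at this
          have haS : a ∈ S := by
            rw [mem_inter, mem_insert] at hx
            rcases hx with ⟨hxS, rfl | hxU⟩
            · exact hxS
            · exact absurd hxU (h' x hxS)
          refine Or.inr ⟨S.erase a, fun y hy => ?_, insert_erase haS⟩
          rw [mem_erase] at hy
          rw [mem_sdiff, mem_insert, not_or]
          exact ⟨hS hy.2, hy.1, h' y hy.2⟩
      · rintro (⟨hS, x, hx⟩ | ⟨T, hT, rfl⟩)
        · rw [mem_inter] at hx
          exact ⟨hS, x, mem_inter.2 ⟨hx.1, mem_insert_of_mem hx.2⟩⟩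
        · refine ⟨insert_subset haA (hT.trans sdiff_subset), a, ?_⟩
          simp
    have hdisj : Disjoint (A.powerset.filter (fun S => (S ∩ U).Nonempty))
        ((A \ insert a U).powerset.image (insert a)) := by
      rw [disjoint_left]
      intro S hS hS'
      simp only [mem_filter, mem_image, mem_powerset] at hS hS'
      obtain ⟨_, x, hx⟩ := hS
      obtain ⟨T, hT, rfl⟩ := hS'
      rw [mem_inter, mem_insert] at hx
      rcases hx with ⟨rfl | hxT, hxU⟩
      · exact ha hxU
      · exact (mem_sdiff.1 (hT hxT)).2 (mem_insert_of_mem hxU)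
    have hnot : ∀ T ∈ (A \ insert a U).powerset, a ∉ T := fun T hT haT =>
      (mem_sdiff.1 (mem_powerset.1 hT haT)).2 (mem_insert_self a U)
    rw [hsplit, sum_union hdisj, sum_image]
    · congr 1
      have hcard : (A \ insert a U).card = A.card - (U.card + 1) := by
        rw [card_sdiff_of_subset hU, card_insert_of_notMem ha]
      have hle : A.card - (U.card + 1) + 1 ≤ A.card := by
        have : 0 < A.card := card_pos.2 ⟨a, haA⟩
        omega
      rw [sum_congr rfl fun T hT => by rw [card_insert_of_notMem (hnot T hT)],
        sum_powerset_apply_card (fun m => g (m + 1)), hcard]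
      simp only [nsmul_eq_mul]
      -- The binomial coefficients vanish beyond `s = |A \ insert a U|`.
      refine sum_subset (range_subset_range.2 hle) fun s _ hs => ?_
      rw [mem_range, not_lt] at hs
      rw [Nat.choose_eq_zero_of_lt (by omega)]
      simp
    · intro T hT T' hT' h
      rw [← erase_insert (hnot T hT), h, erase_insert (hnot T' hT')]

/-- The equality for one scenario; since `d` is injective on `U`, `|D| = |U|`, and
`sum_powerset_meeting` applies with the common summand as weight. -/
lemma R_MCCS_eq_R_lb {α : Type*} [DecidableEq α] {N : ℕ} (q F : Fin N → ℝ) (c Fc : ℝ)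
    (hq : ∀ n, q n = c) (hF : ∀ n, F n = Fc) (A U : Finset α) (d : α → Fin N)
    (h : IsLeaderGroup A U d) :
    R_MCCS A U d q F = R_lb A.card (A.image d) q F := by
  obtain ⟨hUA, hinj, himg⟩ := h
  have hcard : (A.image d).card = U.card := by rw [← himg, card_image_of_injOn hinj]
  unfold R_MCCS R_lb
  simp only [hq, hF]
  -- The supremum is of a constant family over a nonempty type of bijections.
  have : Nonempty (Fin (A.image d).card ≃ {x : Fin N // x ∈ A.image d}) :=
    ⟨(A.image d).equivFin.symm⟩
  rw [ciSup_const]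
  rw [sum_congr rfl fun S hS => maxOver_const
      ((mem_filter.1 hS).2.mono inter_subset_left) _,
    sum_powerset_meeting A U hUA
      (fun m => c ^ (m - 1) * (1 - c) ^ (A.card - m + 1) * Fc), sum_comm]
  refine sum_congr rfl fun s hs => ?_
  rw [mem_range] at hs
  have he : A.card - (s + 1) + 1 = A.card - s := by omega
  rw [← hcard, ← Fin.sum_univ_eq_sum_range
    (fun i => ((A.card - (i + 1)).choose s : ℝ) *
      (c ^ (s + 1 - 1) * (1 - c) ^ (A.card - (s + 1) + 1) * Fc))]
  refine sum_congr rfl fun i _ => ?_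
  rw [he, Nat.add_sub_cancel]
  ring

/-- Uniform file size `F_n = Fc ≥ 0` and symmetric placement `q*_1 = … = q*_N = c`:
for every active set `A`, demand map `d`, and leader group `U`,
`R_MCCS(d; q*) = R_lb(D; q*)` with `D = {d_k : k ∈ A}`; consequently, for any
finitely many weighted demand scenarios the average rates satisfy
`R̄_MCCS(q*) = R̄_lb(q*)`. -/
theorem rate_eq_lb_uniform_symmetric {α : Type*} [DecidableEq α] {N : ℕ}
    (q F : Fin N → ℝ) (c Fc : ℝ)
    (hc : c ∈ Set.Icc (0 : ℝ) 1) (hFc : 0 ≤ Fc)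
    (hq : ∀ n, q n = c) (hF : ∀ n, F n = Fc) :
    (∀ (A U : Finset α) (d : α → Fin N), IsLeaderGroup A U d →
      R_MCCS A U d q F = R_lb A.card (A.image d) q F) ∧
    (∀ (ι : Type) [Fintype ι] (A U : ι → Finset α) (d : ι → α → Fin N) (w : ι → ℝ),
      (∀ i, 0 ≤ w i) → (∀ i, IsLeaderGroup (A i) (U i) (d i)) →
      ∑ i, w i * R_MCCS (A i) (U i) (d i) q F
        = ∑ i, w i * R_lb (A i).card ((A i).image (d i)) q F) := by
  refine ⟨fun A U d h => R_MCCS_eq_R_lb q F c Fc hq hF A U d h, ?_⟩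
  intro ι _ A U d w _ h
  exact sum_congr rfl fun i _ => by rw [R_MCCS_eq_R_lb q F c Fc hq hF _ _ _ (h i)]
end

section
/- Suppose all files have the same size F > 0 (F_n = F for all n), let N₁ ⊆ {1,…,N} be a nonempty set of cached files with |N₁| = N₁ᶜ files, let M be a cache size with 0 ≤ M ≤ N₁ᶜ · F, and consider the placement q_n = c := M / (N₁ᶜ F) for n ∈ N₁ and q_n = 0 otherwise. For an active set A with demand map d, let A₂ = {k ∈ A : d_k ∉ N₁}, Ñ = |{d_k : k ∈ A}|, and Ñ₂ = |{d_k : k ∈ A₂}|. Then for every leader group U, R_MCCS(d; q) = Σ_{s=0}^{|A|−1} ( Σ_{i=1}^{Ñ} C(|A| − i, s) − Σ_{i=1}^{Ñ₂} C(|A₂| − i, s) ) · c^s (1 − c)^{|A|−s} F + Ñ₂ · F. -/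
/-!
The max over a group `S` depends only on `|S|` and on whether `S ⊆ A₂`. Writing
`g s = c ^ s * (1 - c) ^ (|A| - s) * Fc` and `e s = Fc` for `s = 0`, `0` otherwise, the max is
`e (|S| - 1)` when every user of `S` requests an uncached file, and `g (|S| - 1)` as soon as one
user requests a cached file, since `0 ≤ g s` and, for `s > 0`, the uncached users contribute `0`
(`maxOver_placement`). Hence the rate is the sum of `g (|S| - 1)` over all `S ⊆ A` meeting `U`,
plus the sum of `(e - g) (|S| - 1)` over all `S ⊆ A₂` meeting `U ∩ A₂`.

Both sums are evaluated by `sum_powerset_inter_nonempty`: by the hockey-stick identity, `B` has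
`C(|B|, s+1) - C(|B| - |V|, s+1) = ∑_{i=1}^{|V|} C(|B| - i, s)` subsets of size `s + 1`
meeting `V ⊆ B`. Finally `|U|` and `|U ∩ A₂|` are the numbers of distinct requested files in
`A` and in `A₂` because `U` is a leader group.
-/

open Finset

lemma sum_range_choose_sub (b s v : ℕ) (hv : v ≤ b) :
    ∑ i ∈ range v, ((b - (i + 1)).choose s : ℝ)
      = (b.choose (s + 1) : ℝ) - ((b - v).choose (s + 1) : ℝ) := by
  induction v with
  | zero => simp
  | succ v ih =>
    rw [sum_range_succ, ih (by omega)]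
    have h : b - v = (b - (v + 1)) + 1 := by omega
    rw [h, Nat.choose_succ_succ]
    push_cast
    ring

/-- A sum over nonempty subsets of a function of the cardinality; the upper limit `n` may exceed
`|B|` because the extra binomial coefficients vanish. -/
lemma sum_powerset_nonempty {α : Type*} (B : Finset α) (g : ℕ → ℝ) (n : ℕ) (hn : B.card ≤ n) :
    ∑ S ∈ B.powerset with S.Nonempty, g (S.card - 1)
      = ∑ s ∈ range n, (B.card.choose (s + 1) : ℝ) * g s := by
  have h := sum_powerset_apply_card (fun m => if m = 0 then 0 else g (m - 1)) (x := B)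
  rw [sum_range_succ'] at h
  rw [sum_filter]
  have h1 : ∀ S ∈ B.powerset, (if S.Nonempty then g (S.card - 1) else 0)
      = if S.card = 0 then 0 else g (S.card - 1) := by
    intro S _
    rcases S.eq_empty_or_nonempty with rfl | hS
    · simp
    · simp [hS, hS.ne_empty]
  rw [sum_congr rfl h1, h]
  simp only [nsmul_eq_mul, Nat.add_one_ne_zero, if_false, Nat.add_sub_cancel, if_true, mul_zero,
    add_zero]
  refine sum_subset (range_mono hn) fun s _ hs => ?_
  rw [Nat.choose_eq_zero_of_lt (by simpa [Nat.lt_succ_iff] using hs)]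
  simp

lemma sum_powerset_inter_nonempty {α : Type*} [DecidableEq α] (B V : Finset α) (hV : V ⊆ B)
    (g : ℕ → ℝ) (n : ℕ) (hn : B.card ≤ n) :
    ∑ S ∈ B.powerset with (S ∩ V).Nonempty, g (S.card - 1)
      = ∑ s ∈ range n, (∑ i ∈ range V.card, ((B.card - (i + 1)).choose s : ℝ)) * g s := by
  have hcard := card_le_card hV
  have h1 := sum_powerset_nonempty B g n hn
  have h2 := sum_powerset_nonempty (B \ V) g n ((card_le_card sdiff_subset).trans hn)
  -- The nonempty subsets of `B` that miss `V` are the nonempty subsets of `B \ V`.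
  have h3 := sum_filter_add_sum_filter_not (B.powerset.filter (fun S => S.Nonempty))
    (fun S => (S ∩ V).Nonempty) (fun S => g (S.card - 1))
  have e1 : (B.powerset.filter (fun S => S.Nonempty)).filter (fun S => (S ∩ V).Nonempty)
      = B.powerset.filter (fun S => (S ∩ V).Nonempty) := by
    ext S
    simp only [mem_filter, and_assoc]
    exact and_congr_right fun _ => ⟨fun h => h.2, fun h => ⟨h.mono inter_subset_left, h⟩⟩
  have e2 : (B.powerset.filter (fun S => S.Nonempty)).filter (fun S => ¬ (S ∩ V).Nonempty)
      = (B \ V).powerset.filter (fun S => S.Nonempty) := by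
    ext S
    simp only [mem_filter, mem_powerset, subset_sdiff, not_nonempty_iff_eq_empty,
      disjoint_iff_inter_eq_empty]
    tauto
  rw [e1, e2, h1, h2] at h3
  rw [eq_sub_of_add_eq h3, ← sum_sub_distrib]
  refine sum_congr rfl fun s _ => ?_
  rw [sum_range_choose_sub _ _ _ hcard, card_sdiff_of_subset hV]
  ring

/-- The value of a group: any user of a cached file attains the max, and without such a user only
singletons contribute. The exponent of `1 - c` is `n - (|S| - 1)` in place of `n - |S| + 1`. -/
lemma maxOver_placement {α : Type*} [DecidableEq α] {N : ℕ} (Fc c : ℝ) (hFc : 0 < Fc)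
    (hc0 : 0 ≤ c) (hc1 : c ≤ 1) (N₁ : Finset (Fin N)) (q F : Fin N → ℝ) (hF : ∀ n, F n = Fc)
    (hq : ∀ n, q n = if n ∈ N₁ then c else 0) (d : α → Fin N) (S : Finset α) (hS : S.Nonempty)
    (n : ℕ) (hn : S.card ≤ n) :
    maxOver S (fun k => q (d k) ^ (S.card - 1) * (1 - q (d k)) ^ (n - S.card + 1) * F (d k))
      = if ∀ k ∈ S, d k ∉ N₁ then (if S.card - 1 = 0 then Fc else 0)
        else c ^ (S.card - 1) * (1 - c) ^ (n - (S.card - 1)) * Fc := by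
  have hpos := hS.card_pos
  have hexp : n - S.card + 1 = n - (S.card - 1) := by omega
  have hc1' : 0 ≤ 1 - c := by linarith
  rw [maxOver, dif_pos hS, hexp]
  split_ifs with h h0
  · refine (sup'_congr hS rfl fun k hk => ?_).trans (sup'_const hS Fc)
    simp [hq, hF, h k hk, h0]
  · refine (sup'_congr hS rfl fun k hk => ?_).trans (sup'_const hS 0)
    simp [hq, h k hk, h0]
  · push Not at h
    obtain ⟨k, hk, hkN⟩ := h
    apply le_antisymm
    · refine sup'_le hS _ fun j hj => ?_
      by_cases hjN : d j ∈ N₁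
      · simp [hq, hF, hjN]
      · -- The users `j` and `k` differ, so `|S| ≥ 2` and the term of `j` has a factor `0`.
        have hne : j ≠ k := by
          rintro rfl
          exact hjN hkN
        have h2 : 1 < S.card := one_lt_card.mpr ⟨j, hj, k, hk, hne⟩
        have h0 : S.card - 1 ≠ 0 := by omega
        simp only [hq, hjN, if_false, zero_pow h0, zero_mul]
        positivity
    · refine le_trans (le_of_eq ?_) (le_sup' _ hk)
      simp [hq, hF, hkN]

/-- Two-file-group placement with uniform file size `F_n = Fc > 0`: files in the
nonempty group `N₁` are each cached in fraction `c = M / (|N₁| Fc)` and the remaining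
files are uncached. With `A₂ = {k ∈ A : d_k ∉ N₁}`, `Ñ = |{d_k : k ∈ A}|`, and
`Ñ₂ = |{d_k : k ∈ A₂}|`, for every leader group `U` the D-MCCS rate equals
`Σ_{s=0}^{|A|−1} (Σ_{i=1}^{Ñ} C(|A|−i, s) − Σ_{i=1}^{Ñ₂} C(|A₂|−i, s))
  c^s (1−c)^{|A|−s} Fc + Ñ₂ Fc`. -/
theorem rate_closed_form_two_groups_uniform_size {α : Type*} [DecidableEq α] {N : ℕ}
    (F : Fin N → ℝ) (Fc : ℝ) (hFc : 0 < Fc) (hF : ∀ n, F n = Fc)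
    (N₁ : Finset (Fin N)) (hN₁ : N₁.Nonempty)
    (M : ℝ) (hM0 : 0 ≤ M) (hM1 : M ≤ N₁.card * Fc)
    (c : ℝ) (hc : c = M / (N₁.card * Fc))
    (q : Fin N → ℝ) (hq : ∀ n, q n = if n ∈ N₁ then c else 0)
    (A U : Finset α) (d : α → Fin N) (hU : IsLeaderGroup A U d)
    (A₂ : Finset α) (hA₂ : A₂ = A.filter (fun k => d k ∉ N₁)) :
    R_MCCS A U d q F
      = (∑ s ∈ Finset.range A.card,
          ((∑ i ∈ Finset.range (A.image d).card, ((A.card - (i + 1)).choose s : ℝ))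
            - ∑ i ∈ Finset.range (A₂.image d).card, ((A₂.card - (i + 1)).choose s : ℝ))
            * c ^ s * (1 - c) ^ (A.card - s) * Fc)
        + (A₂.image d).card * Fc := by
  obtain ⟨hUA, hinj, himg⟩ := hU
  have hden : 0 < (N₁.card : ℝ) * Fc := mul_pos (by exact_mod_cast hN₁.card_pos) hFc
  have hc0 : 0 ≤ c := hc ▸ div_nonneg hM0 hden.le
  have hc1 : c ≤ 1 := hc ▸ (div_le_one hden).2 hM1
  have hA₂A : A₂ ⊆ A := hA₂ ▸ filter_subset _ _
  have hcardU : (A.image d).card = U.card := by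
    rw [← himg, card_image_of_injOn hinj]
  have himg₂ : A₂.image d = (U ∩ A₂).image d := by
    apply Subset.antisymm _ (image_subset_image inter_subset_right)
    intro x hx
    obtain ⟨k, hk, rfl⟩ := mem_image.1 hx
    -- The leader for the file `d k` also lies in `A₂`, since membership depends on the file only.
    have hmem : d k ∈ U.image d := himg ▸ mem_image_of_mem d (hA₂A hk)
    obtain ⟨u, hu, hud⟩ := mem_image.1 hmem
    refine mem_image.2 ⟨u, mem_inter.2 ⟨hu, ?_⟩, hud⟩
    rw [hA₂, mem_filter] at hk ⊢
    exact ⟨hUA hu, hud ▸ hk.2⟩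
  have hcardU₂ : (A₂.image d).card = (U ∩ A₂).card := by
    rw [himg₂, card_image_of_injOn (hinj.mono (by simp))]
  set g : ℕ → ℝ := fun s => c ^ s * (1 - c) ^ (A.card - s) * Fc with hg
  set e : ℕ → ℝ := fun s => if s = 0 then Fc else 0 with he
  have hterm : R_MCCS A U d q F
      = ∑ S ∈ A.powerset with (S ∩ U).Nonempty,
          (g (S.card - 1) + if S ⊆ A₂ then e (S.card - 1) - g (S.card - 1) else 0) := by
    refine sum_congr rfl fun S hS => ?_
    rw [mem_filter, mem_powerset] at hS
    rw [maxOver_placement Fc c hFc hc0 hc1 N₁ q F hF hq d S (hS.2.mono inter_subset_left) _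
      (card_le_card hS.1)]
    have hiff : (∀ k ∈ S, d k ∉ N₁) ↔ S ⊆ A₂ := by
      rw [hA₂]
      exact ⟨fun h k hk => mem_filter.2 ⟨hS.1 hk, h k hk⟩, fun h k hk => (mem_filter.1 (h hk)).2⟩
    simp only [hiff]
    split_ifs <;> simp_all
  have hsets : (A.powerset.filter (fun S => (S ∩ U).Nonempty)).filter (fun S => S ⊆ A₂)
      = A₂.powerset.filter (fun S => (S ∩ (U ∩ A₂)).Nonempty) := by
    ext S
    simp only [mem_filter, mem_powerset]
    constructor
    · rintro ⟨⟨_, h⟩, h₂⟩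
      refine ⟨h₂, ?_⟩
      rwa [inter_comm U, ← inter_assoc, inter_eq_left.2 h₂]
    · rintro ⟨h₂, h⟩
      exact ⟨⟨h₂.trans hA₂A, h.mono (inter_subset_inter_left inter_subset_left)⟩, h₂⟩
  have hsum_e : ∑ s ∈ range A.card,
      (∑ i ∈ range (U ∩ A₂).card, ((A₂.card - (i + 1)).choose s : ℝ)) * e s
        = (U ∩ A₂).card * Fc := by
    rcases A.card.eq_zero_or_pos with h0 | h0
    · have hU₂ : (U ∩ A₂).card = 0 := by
        have := card_le_card (inter_subset_left.trans hUA : U ∩ A₂ ⊆ A)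
        omega
      simp [h0, hU₂]
    · rw [sum_eq_single_of_mem 0 (mem_range.2 h0) (fun s _ hs => by simp [he, hs])]
      simp [he]
  rw [hterm, sum_add_distrib, ← sum_filter, hsets,
    sum_powerset_inter_nonempty A U hUA g A.card le_rfl,
    sum_powerset_inter_nonempty A₂ (U ∩ A₂) inter_subset_right (fun s => e s - g s) A.card
      (card_le_card hA₂A), hcardU, hcardU₂, ← hsum_e, ← sum_add_distrib, ← sum_add_distrib]
  refine sum_congr rfl fun s _ => ?_
  simp only [hg]
  ring
end

section
/- For every cache placement vector q ∈ [0,1]^N, every collection of file sizes F_n ≥ 0, every finite active set A with demand map d, and every leader group U for (A, d), the D-MCCS delivery rate is at least the lower-bound rate: R_MCCS(d; q) ≥ R_lb(D; q), where D = {d_k : k ∈ A}. -/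
/-!
Fix a bijection `π` and choose leaders `u i ∈ U` with `d (u i) = π i`; they are distinct.
Group the non-redundant sets `S` by the least index `i` with `u i ∈ S`: such a set is
`insert (u i) T` with `T` a subset of `tailSet A u i = A \ {u j : j ≤ i}`, which has
`|A| - (i + 1)` elements. Bounding the maximum over `S` from below by its value at `u i` and
counting the sets `T` by cardinality gives exactly the sum in `R_lb` that belongs to `π`.
-/

open Finset

lemma le_maxOver {α : Type*} {S : Finset α} (f : α → ℝ) {k : α} (hk : k ∈ S) :
    f k ≤ maxOver S f := by
  unfold maxOver
  rw [dif_pos ⟨k, hk⟩]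
  exact Finset.le_sup' f hk

lemma maxOver_nonneg {α : Type*} (S : Finset α) (f : α → ℝ) (hf : ∀ k, 0 ≤ f k) :
    0 ≤ maxOver S f := by
  by_cases h : S.Nonempty
  · obtain ⟨k, hk⟩ := h
    exact (hf k).trans (le_maxOver f hk)
  · simp [maxOver, h]

/-- The elements of `A` other than `u j` for `j ≤ i`. -/
def tailSet {α : Type*} [DecidableEq α] (A : Finset α) {m : ℕ} (u : Fin m → α) (i : Fin m) :
    Finset α :=
  A \ (Finset.Iic i).image u

lemma card_tailSet {α : Type*} [DecidableEq α] {A : Finset α} {m : ℕ} {u : Fin m → α}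
    (hu : Function.Injective u) (huA : ∀ i, u i ∈ A) (i : Fin m) :
    (tailSet A u i).card = A.card - (i.1 + 1) := by
  unfold tailSet
  rw [Finset.card_sdiff_of_subset, Finset.card_image_of_injective _ hu, Fin.card_Iic]
  intro x hx
  obtain ⟨j, -, rfl⟩ := Finset.mem_image.1 hx
  exact huA j

lemma notMem_tailSet {α : Type*} [DecidableEq α] (A : Finset α) {m : ℕ} (u : Fin m → α)
    {i j : Fin m} (h : j ≤ i) : u j ∉ tailSet A u i := by
  intro hj
  exact (Finset.mem_sdiff.1 hj).2 (Finset.mem_image_of_mem u (Finset.mem_Iic.2 h))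

/-- The set `insert (u i) T` with `T ⊆ tailSet A u i` determines `i`, as the least index whose
`u`-value it contains, and then also `T`. -/
lemma insert_injOn {α : Type*} [DecidableEq α] (A : Finset α) {m : ℕ} {u : Fin m → α}
    (hu : Function.Injective u) :
    Set.InjOn (fun x : (_ : Fin m) × Finset α => insert (u x.1) x.2)
      (Finset.univ.sigma fun i => (tailSet A u i).powerset) := by
  have key : ∀ (i j : Fin m) (T T' : Finset α), T' ⊆ tailSet A u j →
      insert (u i) T = insert (u j) T' → j ≤ i := by
    intro i j T T' hT' h
    by_contra! hij
    have hmem : u i ∈ insert (u j) T' := h ▸ Finset.mem_insert_self _ _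
    rcases Finset.mem_insert.1 hmem with h1 | h1
    · exact hij.ne (hu h1)
    · exact notMem_tailSet A u hij.le (hT' h1)
  rintro ⟨i, T⟩ hT ⟨j, T'⟩ hT' h
  simp only [Finset.coe_sigma, Set.mem_sigma_iff, Finset.mem_coe, Finset.mem_univ, true_and,
    Finset.mem_powerset] at hT hT' h
  obtain rfl : i = j := le_antisymm (key j i T' T hT h.symm) (key i j T T' hT' h)
  have h1 : u i ∉ T := fun hh => notMem_tailSet A u le_rfl (hT hh)
  have h2 : u i ∉ T' := fun hh => notMem_tailSet A u le_rfl (hT' hh)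
  rw [← Finset.erase_insert h1, h, Finset.erase_insert h2]

/-- For every cache placement vector `q ∈ [0,1]^N`, every collection of nonnegative
file sizes, every finite active set `A` with demand map `d`, and every leader group
`U` for `(A, d)`, the D-MCCS delivery rate is at least the lower-bound rate with
`D = {d_k : k ∈ A}`. -/
theorem lb_le_rate {α : Type*} [DecidableEq α] {N : ℕ}
    (A U : Finset α) (d : α → Fin N) (q F : Fin N → ℝ)
    (hq : ∀ n, q n ∈ Set.Icc (0 : ℝ) 1) (hF : ∀ n, 0 ≤ F n)
    (hU : IsLeaderGroup A U d) :
    R_lb A.card (A.image d) q F ≤ R_MCCS A U d q F := by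
  obtain ⟨hUA, -, himg⟩ := hU
  unfold R_lb R_MCCS
  have : Nonempty (Fin (A.image d).card ≃ {x : Fin N // x ∈ A.image d}) :=
    ⟨(A.image d).equivFin.symm⟩
  refine ciSup_le fun π => ?_
  have hex : ∀ i, ∃ k ∈ U, d k = (π i).1 := fun i =>
    Finset.mem_image.1 (himg.ge (π i).2)
  choose u huU hud using hex
  have hu : Function.Injective u := fun i j h => by
    apply π.injective
    apply Subtype.ext
    rw [← hud, ← hud, h]
  have huA : ∀ i, u i ∈ A := fun i => hUA (huU i)
  set v : Finset α → α → ℝ := fun S k =>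
    q (d k) ^ (S.card - 1) * (1 - q (d k)) ^ (A.card - S.card + 1) * F (d k) with hv
  have hv0 : ∀ S k, 0 ≤ v S k := fun S k =>
    mul_nonneg (mul_nonneg (pow_nonneg (hq _).1 _)
      (pow_nonneg (sub_nonneg.2 (hq _).2) _)) (hF _)
  -- The inner sum over `s` counts the sets `T ⊆ tailSet A u i` by cardinality.
  have hcount : ∀ i, ∑ s ∈ Finset.range A.card,
      ((A.card - (i.1 + 1)).choose s : ℝ) * q (π i).1 ^ s *
        (1 - q (π i).1) ^ (A.card - s) * F (π i).1
      = ∑ T ∈ (tailSet A u i).powerset, v (insert (u i) T) (u i) := by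
    intro i
    have hpos : 0 < A.card := Finset.card_pos.2 ⟨_, huA i⟩
    have hstep : ∀ T ∈ (tailSet A u i).powerset, v (insert (u i) T) (u i) =
        q (π i).1 ^ T.card * (1 - q (π i).1) ^ (A.card - T.card) * F (π i).1 := by
      intro T hT
      rw [Finset.mem_powerset] at hT
      have hc := Finset.card_le_card hT
      rw [card_tailSet hu huA] at hc
      have hn : u i ∉ T := fun hh => notMem_tailSet A u le_rfl (hT hh)
      have he : A.card - (T.card + 1) + 1 = A.card - T.card := by omega
      simp only [hv, hud, Finset.card_insert_of_notMem hn, he, Nat.add_sub_cancel]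
    rw [Finset.sum_congr rfl hstep, Finset.sum_powerset_apply_card
      (fun s => q (π i).1 ^ s * (1 - q (π i).1) ^ (A.card - s) * F (π i).1),
      card_tailSet hu huA]
    -- The terms with `s > |A| - (i + 1)` vanish because the binomial coefficient does.
    symm
    simp only [nsmul_eq_mul, ← mul_assoc]
    apply Finset.sum_subset
    · intro s hs
      rw [Finset.mem_range] at hs ⊢
      omega
    · intro s _ hs
      rw [Finset.mem_range, not_lt] at hs
      rw [Nat.choose_eq_zero_of_lt (by omega)]
      simp
  rw [Finset.sum_comm, Finset.sum_congr rfl fun i _ => hcount i, Finset.sum_sigma']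
  calc _ ≤ ∑ x ∈ Finset.univ.sigma fun i => (tailSet A u i).powerset,
          maxOver (insert (u x.1) x.2) (v (insert (u x.1) x.2)) :=
        Finset.sum_le_sum fun x _ => le_maxOver _ (Finset.mem_insert_self _ _)
    _ = ∑ S ∈ (Finset.univ.sigma fun i => (tailSet A u i).powerset).image
          (fun x => insert (u x.1) x.2), maxOver S (v S) :=
        (Finset.sum_image (f := fun S => maxOver S (v S)) (insert_injOn A hu)).symm
    _ ≤ _ := by
        refine Finset.sum_le_sum_of_subset_of_nonneg ?_ fun S _ _ => maxOver_nonneg S _ (hv0 S)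
        intro S hS
        obtain ⟨⟨i, T⟩, hT, rfl⟩ := Finset.mem_image.1 hS
        simp only [Finset.mem_sigma, Finset.mem_univ, true_and, Finset.mem_powerset] at hT
        rw [Finset.mem_filter, Finset.mem_powerset]
        exact ⟨Finset.insert_subset (huA i) (hT.trans Finset.sdiff_subset),
          u i, Finset.mem_inter.2 ⟨Finset.mem_insert_self _ _, huU i⟩⟩
end

section
/- Let A be a finite set and U, B ⊆ A subsets, with m = |U| and m₂ = |U ∩ B|. For every natural number s, the number of subsets S ⊆ A with |S| = s + 1, S ∩ U ≠ ∅, and S ⊄ B equals Σ_{i=1}^{m} C(|A| − i, s) − Σ_{i=1}^{m₂} C(|B| − i, s). -/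
/-!
The `(s + 1)`-subsets of `X` meeting `V ⊆ X` are all `(s + 1)`-subsets of `X` except those of
`X \ V`, so there are `C(|X|, s + 1) - C(|X| - |V|, s + 1)` of them, and Pascal's rule telescopes
this difference into `∑_{i=1}^{|V|} C(|X| - i, s)` (`card_meeting`). Among the `(s + 1)`-subsets of
`A` meeting `U`, those contained in `B` are exactly the `(s + 1)`-subsets of `B` meeting `U ∩ B`;
the claim is the difference of the two counts. The subtraction of natural numbers never truncates,
since the second family is part of the first.
-/

/-- Pascal's rule, telescoped. -/
lemma sum_choose_sub_add_choose (n s k : ℕ) (hk : k ≤ n) :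
    ∑ i ∈ Finset.Icc 1 k, (n - i).choose s + (n - k).choose (s + 1) = n.choose (s + 1) := by
  induction k with
  | zero => simp
  | succ k ih =>
    have ih := ih (by omega)
    rw [Finset.sum_Icc_succ_top (by omega)]
    have h : n - k = (n - (k + 1)) + 1 := by omega
    rw [h, Nat.choose_succ_succ'] at ih
    omega

lemma card_meeting {α : Type*} [DecidableEq α] (X V : Finset α) (hV : V ⊆ X) (s : ℕ) :
    (X.powerset.filter (fun S => S.card = s + 1 ∧ (S ∩ V).Nonempty)).card
      = ∑ i ∈ Finset.Icc 1 V.card, (X.card - i).choose s := by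
  have h1 := sum_choose_sub_add_choose X.card s V.card (Finset.card_le_card hV)
  have h2 := Finset.card_filter_add_card_filter_not (s := X.powersetCard (s + 1))
    (fun S => (S ∩ V).Nonempty)
  have h3 : (X.powersetCard (s + 1)).filter (fun S => ¬ (S ∩ V).Nonempty)
      = (X \ V).powersetCard (s + 1) := by
    ext S
    simp only [Finset.mem_filter, Finset.mem_powersetCard, Finset.not_nonempty_iff_eq_empty,
      ← Finset.disjoint_iff_inter_eq_empty, Finset.subset_sdiff]
    tauto
  have h4 : X.powerset.filter (fun S => S.card = s + 1 ∧ (S ∩ V).Nonempty)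
      = (X.powersetCard (s + 1)).filter (fun S => (S ∩ V).Nonempty) := by
    ext S
    simp only [Finset.mem_filter, Finset.mem_powersetCard, Finset.mem_powerset]
    tauto
  rw [h3, Finset.card_powersetCard, Finset.card_powersetCard,
    Finset.card_sdiff_of_subset hV] at h2
  rw [h4]
  omega

/-- Let `A` be a finite set and `U, B ⊆ A`, with `m = |U|` and `m₂ = |U ∩ B|`. For every
natural number `s`, the number of subsets `S ⊆ A` with `|S| = s + 1`, `S ∩ U ≠ ∅`, and
`S ⊄ B` equals `Σ_{i=1}^{m} C(|A| − i, s) − Σ_{i=1}^{m₂} C(|B| − i, s)`. -/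
theorem card_subsets_meeting_not_subset_eq_sum_sub_sum {α : Type*} [DecidableEq α]
    (A U B : Finset α) (hU : U ⊆ A) (hB : B ⊆ A) (m m₂ : ℕ)
    (hm : U.card = m) (hm₂ : (U ∩ B).card = m₂) (s : ℕ) :
    (A.powerset.filter (fun S => S.card = s + 1 ∧ (S ∩ U).Nonempty ∧ ¬ S ⊆ B)).card
      = ∑ i ∈ Finset.Icc 1 m, (A.card - i).choose s
        - ∑ i ∈ Finset.Icc 1 m₂, (B.card - i).choose s := by
  subst hm hm₂
  rw [← card_meeting A U hU s, ← card_meeting B (U ∩ B) Finset.inter_subset_right s]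
  have h := Finset.card_filter_add_card_filter_not
    (s := A.powerset.filter (fun S => S.card = s + 1 ∧ (S ∩ U).Nonempty)) (fun S => S ⊆ B)
  have h1 : (A.powerset.filter (fun S => S.card = s + 1 ∧ (S ∩ U).Nonempty)).filter
      (fun S => S ⊆ B)
      = B.powerset.filter (fun S => S.card = s + 1 ∧ (S ∩ (U ∩ B)).Nonempty) := by
    ext S
    simp only [Finset.mem_filter, Finset.mem_powerset]
    constructor
    · rintro ⟨⟨_, hc, x, hx⟩, hSB⟩
      rw [Finset.mem_inter] at hx
      exact ⟨hSB, hc, x, by simp [hx.1, hx.2, hSB hx.1]⟩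
    · rintro ⟨hSB, hc, x, hx⟩
      simp only [Finset.mem_inter] at hx
      exact ⟨⟨hSB.trans hB, hc, x, by simp [hx.1, hx.2.1]⟩, hSB⟩
  have h2 : (A.powerset.filter (fun S => S.card = s + 1 ∧ (S ∩ U).Nonempty)).filter
      (fun S => ¬ S ⊆ B)
      = A.powerset.filter (fun S => S.card = s + 1 ∧ (S ∩ U).Nonempty ∧ ¬ S ⊆ B) := by
    ext S
    simp only [Finset.mem_filter]
    tauto
  rw [h1, h2] at h
  omega
end
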